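/- For |x| < 1/4 real, the sum of the series \sum_{k=0}^{∞} C_k x^{k+1} (Catalan numbers C_k) converges and equals 2x/(1+sqrt(1-4x)). -/

import Mathlib

/-!
At radius `1/4` the partial sums of the series telescope to
`(1 - binom(2n, n) / 4 ^ n) / 2 ≤ 1/2`, so for `‖z‖ ≤ 1/4` the series converges absolutely to some
`s` with `‖s‖ ≤ 1/2`. Segner's recurrence says that the Cauchy square of the series is its tail, so
`s = z + s ^ 2`, that is, `(1 - 2 * s) ^ 2 = 1 - 4 * z`. The bound on `s` places `1 - 2 * s` in the
disc `‖1 - w‖ ≤ 1` of the closed right half-plane, where it must be the principal square root of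
`1 - 4 * z`.
-/

open Finset

theorem centralBinom_succ_eq_mul_catalan (n : ℕ) :
    (n + 1).centralBinom = 2 * (2 * n + 1) * catalan n := by
  apply Nat.eq_of_mul_eq_mul_left (Nat.add_one_pos n)
  rw [Nat.succ_mul_centralBinom_succ, ← succ_mul_catalan_eq_centralBinom]
  ring

theorem sum_range_catalan_mul_one_div_four_pow {K : Type*} [Field K] [CharZero K] (n : ℕ) :
    ∑ k ∈ range n, (catalan k : K) * (1 / 4) ^ (k + 1) =
      (1 - n.centralBinom * (1 / 4) ^ n) / 2 := by
  induction n with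
  | zero => simp
  | succ n ih =>
    rw [sum_range_succ, ih, centralBinom_succ_eq_mul_catalan, ← succ_mul_catalan_eq_centralBinom]
    push_cast
    ring

theorem sum_range_catalan_mul_one_div_four_pow_le (n : ℕ) :
    ∑ k ∈ range n, (catalan k : ℝ) * (1 / 4) ^ (k + 1) ≤ 1 / 2 := by
  rw [sum_range_catalan_mul_one_div_four_pow]
  have : (0 : ℝ) ≤ n.centralBinom * (1 / 4) ^ n := by positivity
  linarith

theorem summable_catalan_mul_one_div_four_pow :
    Summable fun k : ℕ ↦ (catalan k : ℝ) * (1 / 4) ^ (k + 1) :=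
  summable_of_sum_range_le (fun _ ↦ by positivity) sum_range_catalan_mul_one_div_four_pow_le

theorem tsum_catalan_mul_one_div_four_pow_le :
    ∑' k : ℕ, (catalan k : ℝ) * (1 / 4) ^ (k + 1) ≤ 1 / 2 :=
  Real.tsum_le_of_sum_range_le (fun _ ↦ by positivity) sum_range_catalan_mul_one_div_four_pow_le

section NormedRing

variable {A : Type*} [NormedRing A] {a : A}

theorem norm_catalan_mul_pow_succ_le (ha : ‖a‖ ≤ 1 / 4) (k : ℕ) :
    ‖(catalan k : A) * a ^ (k + 1)‖ ≤ catalan k * (1 / 4) ^ (k + 1) :=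
  calc ‖(catalan k : A) * a ^ (k + 1)‖
    _ ≤ catalan k * ‖a ^ (k + 1)‖ := by
      rw [← nsmul_eq_mul]
      exact norm_nsmul_le
    _ ≤ catalan k * ‖a‖ ^ (k + 1) := by
      gcongr
      exact norm_pow_le' a k.succ_pos
    _ ≤ catalan k * (1 / 4) ^ (k + 1) := by gcongr

theorem summable_norm_catalan_mul_pow_succ (ha : ‖a‖ ≤ 1 / 4) :
    Summable fun k : ℕ ↦ ‖(catalan k : A) * a ^ (k + 1)‖ :=
  summable_catalan_mul_one_div_four_pow.of_nonneg_of_le (fun _ ↦ norm_nonneg _)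
    (norm_catalan_mul_pow_succ_le ha)

theorem norm_tsum_catalan_mul_pow_succ_le (ha : ‖a‖ ≤ 1 / 4) :
    ‖∑' k : ℕ, (catalan k : A) * a ^ (k + 1)‖ ≤ 1 / 2 :=
  (tsum_of_norm_bounded summable_catalan_mul_one_div_four_pow.hasSum
    (norm_catalan_mul_pow_succ_le ha)).trans tsum_catalan_mul_one_div_four_pow_le

end NormedRing

theorem sum_antidiagonal_catalan_mul_pow_succ {R : Type*} [Semiring R] (a : R) (n : ℕ) :
    ∑ p ∈ antidiagonal n, (catalan p.1 * a ^ (p.1 + 1)) * (catalan p.2 * a ^ (p.2 + 1)) =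
      catalan (n + 1) * a ^ (n + 2) := by
  rw [catalan_succ', Nat.cast_sum, sum_mul]
  refine sum_congr rfl fun p hp ↦ ?_
  rw [((catalan p.2).commute_cast (a ^ (p.1 + 1))).mul_mul_mul_comm, ← pow_add, Nat.cast_mul,
    ← mem_antidiagonal.mp hp, add_add_add_comm]

theorem tsum_catalan_mul_pow_succ_eq_add_sq {A : Type*} [NormedRing A] [CompleteSpace A] {a : A}
    (h : Summable fun k : ℕ ↦ ‖(catalan k : A) * a ^ (k + 1)‖) :
    ∑' k : ℕ, (catalan k : A) * a ^ (k + 1) =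
      a + (∑' k : ℕ, (catalan k : A) * a ^ (k + 1)) ^ 2 := by
  rw [sq, tsum_mul_tsum_eq_tsum_sum_antidiagonal_of_summable_norm h h]
  simp only [sum_antidiagonal_catalan_mul_pow_succ]
  rw [h.of_norm.tsum_eq_zero_add, catalan_zero, Nat.cast_one, one_mul, zero_add, pow_one]

section RCLike

variable {𝕜 : Type*} [RCLike 𝕜]

theorem rclike_sqrt_sq_of_re_pos {w : 𝕜} (hw : 0 < RCLike.re w) : RCLike.sqrt (w ^ 2) = w := by
  have re_sq : RCLike.re (w ^ 2) = RCLike.re w ^ 2 - RCLike.im w ^ 2 := by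
    rw [sq, RCLike.mul_re, sq, sq]
  have im_sq : RCLike.im (w ^ 2) = 2 * RCLike.re w * RCLike.im w := by
    rw [sq, RCLike.mul_im]
    ring
  have norm_sq : ‖w ^ 2‖ = RCLike.re w ^ 2 + RCLike.im w ^ 2 := by
    rw [norm_pow, RCLike.norm_sq_eq_def, sq, sq]
  have re_root : √((‖w ^ 2‖ + RCLike.re (w ^ 2)) / 2) = RCLike.re w := by
    rw [norm_sq, re_sq, add_add_sub_cancel, add_self_div_two, Real.sqrt_sq hw.le]
  have im_root : √((‖w ^ 2‖ - RCLike.re (w ^ 2)) / 2) = |RCLike.im w| := by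
    rw [norm_sq, re_sq, add_sub_sub_cancel, add_self_div_two, Real.sqrt_sq_eq_abs]
  have im_sq_nonneg : 0 ≤ RCLike.im (w ^ 2) ↔ 0 ≤ RCLike.im w := by
    rw [im_sq, mul_nonneg_iff_of_pos_left (by positivity)]
  rw [RCLike.sqrt_eq_real_add_ite, re_root, im_root]
  simp only [im_sq_nonneg]
  conv_rhs => rw [← RCLike.re_add_im w]
  split_ifs with him
  · rw [abs_of_nonneg him, one_mul]
  · rw [abs_of_neg (not_le.mp him), RCLike.ofReal_neg, neg_one_mul, neg_neg]

theorem rclike_sqrt_sq_of_norm_one_sub_le_one {w : 𝕜} (hw : ‖1 - w‖ ≤ 1) :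
    RCLike.sqrt (w ^ 2) = w := by
  have one_sub_re_le : 1 - RCLike.re w ≤ ‖1 - w‖ := by
    simpa only [map_sub, RCLike.one_re] using RCLike.re_le_norm (1 - w)
  rcases (show 0 ≤ RCLike.re w by linarith).eq_or_lt with re_eq_zero | re_pos
  · -- The disc `‖1 - w‖ ≤ 1` meets the imaginary axis only at the origin.
    have re_one_sub : RCLike.re (1 - w) = 1 := by
      rw [map_sub, RCLike.one_re, ← re_eq_zero, sub_zero]
    have one_eq : (1 : 𝕜) = 1 - w := by
      simpa only [re_one_sub, RCLike.ofReal_one] using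
        RCLike.re_eq_self_of_le (hw.trans_eq re_one_sub.symm)
    rw [sub_eq_self.mp one_eq.symm, zero_pow two_ne_zero, RCLike.sqrt_zero]
  · exact rclike_sqrt_sq_of_re_pos re_pos

theorem eq_two_mul_div_one_add_sqrt_of_eq_add_sq {z s : 𝕜} (hs : ‖s‖ ≤ 1 / 2)
    (h : s = z + s ^ 2) : s = 2 * z / (1 + RCLike.sqrt (1 - 4 * z)) := by
  have norm_two_mul : ‖2 * s‖ ≤ 1 := by
    rw [norm_mul, RCLike.norm_ofNat]
    linarith
  have sqrt_eq : RCLike.sqrt (1 - 4 * z) = 1 - 2 * s := by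
    rw [show 1 - 4 * z = (1 - 2 * s) ^ 2 by linear_combination 4 * h]
    exact rclike_sqrt_sq_of_norm_one_sub_le_one (by rwa [sub_sub_cancel])
  have s_ne_one : s ≠ 1 := by
    rintro rfl
    norm_num at hs
  have denom_ne_zero : 1 + (1 - 2 * s) ≠ 0 := by
    rw [show 1 + (1 - 2 * s) = 2 * (1 - s) by ring]
    exact mul_ne_zero two_ne_zero (sub_ne_zero.mpr s_ne_one.symm)
  rw [sqrt_eq, eq_div_iff denom_ne_zero]
  linear_combination 2 * h

theorem catalan_series_sum_general (z : 𝕜) (hz : ‖z‖ ≤ 1 / 4) :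
    HasSum (fun k : ℕ ↦ (catalan k : 𝕜) * z ^ (k + 1))
      (2 * z / (1 + RCLike.sqrt (1 - 4 * z))) := by
  have summable_norm := summable_norm_catalan_mul_pow_succ hz
  rw [← eq_two_mul_div_one_add_sqrt_of_eq_add_sq (norm_tsum_catalan_mul_pow_succ_le hz)
    (tsum_catalan_mul_pow_succ_eq_add_sq summable_norm)]
  exact summable_norm.of_norm.hasSum

end RCLike

/-- For real `x` with `|x| < 1/4`, the series `∑_{k≥0} catalan k * x^{k+1}`
converges to `2x/(1 + √(1-4x))`. -/
theorem catalan_series_sum (x : ℝ) (hx : |x| < 1 / 4) :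
    HasSum (fun k : ℕ => (catalan k : ℝ) * x ^ (k + 1))
      (2 * x / (1 + Real.sqrt (1 - 4 * x))) := by
  simpa only [RCLike.sqrt_real, RCLike.ofReal_real_eq_id, id_eq] using
    catalan_series_sum_general x hx.le
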